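/- arXiv:1810.11616 — 6 statements merged into one kernel-verified Lean document; each statement's English description precedes it below -/
import Mathlib

section
/- Let N ≥ 1, let p > 1 be a real number, and let A : ℝ^N → ℝ be strictly convex, positively p-homogeneous, with A(ξ) > 0 for ξ ≠ 0 and A(0) = 0. Define N₁(ξ) = A(ξ)^(1/p). Then for every t ∈ [0,1] and all ξ₁, ξ₂ ∈ ℝ^N one has N₁((1−t)ξ₁ + t ξ₂) ≤ max(N₁(ξ₁), N₁(ξ₂)); moreover, for t ∈ (0,1) this inequality is strict unless ξ₁ = λ • ξ₂ for some λ > 0. -/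
open Real

/-! Since `x ↦ x ^ (1 / p)` is strictly increasing on `[0, ∞)`, it commutes with `max` there and
carries the (strict) quasiconvexity of `A` over to `A ^ (1 / p)`. -/

section CompConvex

variable {𝕜 E β γ : Type*} [Semiring 𝕜] [PartialOrder 𝕜] [AddCommMonoid E] [SMul 𝕜 E]
  [AddCommMonoid β] [LinearOrder β] [IsOrderedAddMonoid β] [Module 𝕜 β] [PosSMulStrictMono 𝕜 β]
  [LinearOrder γ] {s : Set E} {u : Set β} {f : E → β} {g : β → γ} {x y : E} {a b : 𝕜}

theorem comp_le_max_of_convexOn (hf : ConvexOn 𝕜 s f) (hg : MonotoneOn g u)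
    (hfu : Set.MapsTo f s u) (hx : x ∈ s) (hy : y ∈ s) (ha : 0 ≤ a) (hb : 0 ≤ b)
    (hab : a + b = 1) : g (f (a • x + b • y)) ≤ max (g (f x)) (g (f y)) := by
  rw [← hg.map_max (hfu hx) (hfu hy)]
  exact hg (hfu (hf.1 hx hy ha hb hab)) (max_rec' (· ∈ u) (hfu hx) (hfu hy))
    (hf.le_on_segment' hx hy ha hb hab)

theorem comp_lt_max_of_strictConvexOn (hf : StrictConvexOn 𝕜 s f) (hg : StrictMonoOn g u)
    (hfu : Set.MapsTo f s u) (hx : x ∈ s) (hy : y ∈ s) (hxy : x ≠ y) (ha : 0 < a) (hb : 0 < b)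
    (hab : a + b = 1) : g (f (a • x + b • y)) < max (g (f x)) (g (f y)) := by
  rw [← hg.monotoneOn.map_max (hfu hx) (hfu hy)]
  exact hg (hfu (hf.1 hx hy ha.le hb.le hab)) (max_rec' (· ∈ u) (hfu hx) (hfu hy))
    (hf.lt_on_open_segment' hx hy hxy ha hb hab)

end CompConvex

theorem nonneg_of_pos_of_ne_zero {E β : Type*} [Zero E] [Zero β] [Preorder β] {f : E → β}
    (hpos : ∀ x, x ≠ 0 → 0 < f x) (hzero : f 0 = 0) (x : E) : 0 ≤ f x := by
  rcases eq_or_ne x 0 with rfl | hx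
  · exact hzero.ge
  · exact (hpos x hx).le

theorem picone_N1_max_ineq_general {E : Type*} [AddCommMonoid E] [Module ℝ E] {s : Set E}
    {A : E → ℝ} {p : ℝ} (hp : 0 < p) (hconv : StrictConvexOn ℝ s A) (hnonneg : ∀ ξ ∈ s, 0 ≤ A ξ) :
    (∀ t ∈ Set.Icc (0 : ℝ) 1, ∀ ξ₁ ∈ s, ∀ ξ₂ ∈ s,
      A ((1 - t) • ξ₁ + t • ξ₂) ^ (1 / p) ≤ max (A ξ₁ ^ (1 / p)) (A ξ₂ ^ (1 / p))) ∧
    (∀ t ∈ Set.Ioo (0 : ℝ) 1, ∀ ξ₁ ∈ s, ∀ ξ₂ ∈ s, ξ₁ ≠ ξ₂ →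
      A ((1 - t) • ξ₁ + t • ξ₂) ^ (1 / p) < max (A ξ₁ ^ (1 / p)) (A ξ₂ ^ (1 / p))) := by
  have hroot : StrictMonoOn (fun x : ℝ ↦ x ^ (1 / p)) (Set.Ici 0) :=
    strictMonoOn_rpow_Ici_of_exponent_pos (one_div_pos.2 hp)
  constructor
  · rintro t ⟨ht₀, ht₁⟩ ξ₁ hξ₁ ξ₂ hξ₂
    exact comp_le_max_of_convexOn hconv.convexOn hroot.monotoneOn hnonneg hξ₁ hξ₂
      (sub_nonneg.2 ht₁) ht₀ (sub_add_cancel 1 t)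
  · rintro t ⟨ht₀, ht₁⟩ ξ₁ hξ₁ ξ₂ hξ₂ hne
    exact comp_lt_max_of_strictConvexOn hconv hroot hnonneg hξ₁ hξ₂ hne
      (sub_pos.2 ht₁) ht₀ (sub_add_cancel 1 t)

theorem picone_N1_max_ineq
    (N : ℕ) (hN : 1 ≤ N) (p : ℝ) (hp : 1 < p)
    (A : EuclideanSpace ℝ (Fin N) → ℝ)
    (hconv : StrictConvexOn ℝ Set.univ A)
    (hhom : ∀ t : ℝ, 0 ≤ t → ∀ ξ : EuclideanSpace ℝ (Fin N), A (t • ξ) = t ^ p * A ξ)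
    (hpos : ∀ ξ : EuclideanSpace ℝ (Fin N), ξ ≠ 0 → 0 < A ξ)
    (hzero : A 0 = 0) :
    (∀ t ∈ Set.Icc (0:ℝ) 1, ∀ ξ₁ ξ₂ : EuclideanSpace ℝ (Fin N),
      (A ((1 - t) • ξ₁ + t • ξ₂)) ^ (1/p) ≤ max ((A ξ₁) ^ (1/p)) ((A ξ₂) ^ (1/p))) ∧
    (∀ t ∈ Set.Ioo (0:ℝ) 1, ∀ ξ₁ ξ₂ : EuclideanSpace ℝ (Fin N),
      (¬ ∃ l : ℝ, 0 < l ∧ ξ₁ = l • ξ₂) →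
      (A ((1 - t) • ξ₁ + t • ξ₂)) ^ (1/p) < max ((A ξ₁) ^ (1/p)) ((A ξ₂) ^ (1/p))) := by
  have ⟨hle, hlt⟩ := picone_N1_max_ineq_general (zero_lt_one.trans hp) hconv
    fun ξ _ ↦ nonneg_of_pos_of_ne_zero hpos hzero ξ
  exact ⟨fun t ht ξ₁ ξ₂ ↦ hle t ht ξ₁ trivial ξ₂ trivial, fun t ht ξ₁ ξ₂ hray ↦
    hlt t ht ξ₁ trivial ξ₂ trivial fun heq ↦ hray ⟨1, one_pos, by rw [heq, one_smul]⟩⟩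
end

section
/- Let N ≥ 1, let p > 1 be a real number, and let A : ℝ^N → ℝ be strictly convex, positively p-homogeneous, with A(ξ) > 0 for ξ ≠ 0 and A(0) = 0. Define N₁(ξ) = A(ξ)^(1/p). Then N₁ is subadditive: N₁(ξ₁ + ξ₂) ≤ N₁(ξ₁) + N₁(ξ₂) for all ξ₁, ξ₂ ∈ ℝ^N. -/
open Real

/-!
A positively `1`-homogeneous function `f ≥ 0` is the Minkowski gauge of its unit sublevel set: if
`f x < a` and `f y < b`, then `a⁻¹ • x` and `b⁻¹ • y` lie in `{f ≤ 1}`. When this set is convex, it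
also contains their convex combination `(a + b)⁻¹ • (x + y)`, which says `f (x + y) ≤ a + b`.
Taking the `p`-th root of a `p`-homogeneous function makes it `1`-homogeneous without changing its
unit sublevel set.
-/

variable {E : Type*} [AddCommGroup E] [Module ℝ E]

/-- Positive homogeneity of real degree `p`. The scalar `t = 0` is included, as usual for
positive `p`, where it forces `f 0 = 0`. -/
def IsPosHomogeneous (p : ℝ) (f : E → ℝ) : Prop :=
  ∀ t : ℝ, 0 ≤ t → ∀ x : E, f (t • x) = t ^ p * f x

namespace IsPosHomogeneous

variable {p : ℝ} {f : E → ℝ}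

theorem rpow (hf : IsPosHomogeneous p f) (hf₀ : ∀ x, 0 ≤ f x) (q : ℝ) :
    IsPosHomogeneous (p * q) (fun x ↦ f x ^ q) := by
  intro t ht x
  simp only [hf t ht x]
  rw [mul_rpow (rpow_nonneg ht p) (hf₀ x), rpow_mul ht]

theorem map_inv_smul_le_one_iff (hf : IsPosHomogeneous 1 f) {a : ℝ} (ha : 0 < a) (x : E) :
    f (a⁻¹ • x) ≤ 1 ↔ f x ≤ a := by
  rw [hf _ (inv_nonneg.2 ha.le), rpow_one, inv_mul_le_one₀ ha]

theorem map_add_le (hf : IsPosHomogeneous 1 f) (hf₀ : ∀ x, 0 ≤ f x)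
    (hconv : Convex ℝ {x | f x ≤ 1}) (x y : E) : f (x + y) ≤ f x + f y := by
  refine le_add_of_forall_lt fun a hxa b hyb ↦ ?_
  have ha : 0 < a := (hf₀ x).trans_lt hxa
  have hb : 0 < b := (hf₀ y).trans_lt hyb
  have hab : 0 < a + b := add_pos ha hb
  have hx : f (a⁻¹ • x) ≤ 1 := (hf.map_inv_smul_le_one_iff ha x).2 hxa.le
  have hy : f (b⁻¹ • y) ≤ 1 := (hf.map_inv_smul_le_one_iff hb y).2 hyb.le
  have hcomb : (a / (a + b)) • a⁻¹ • x + (b / (a + b)) • b⁻¹ • y = (a + b)⁻¹ • (x + y) := by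
    rw [smul_smul, smul_smul, smul_add]
    congr 2 <;> field_simp
  have hsum : f ((a + b)⁻¹ • (x + y)) ≤ 1 := hcomb ▸
    hconv hx hy (div_pos ha hab).le (div_pos hb hab).le (by field_simp)
  exact (hf.map_inv_smul_le_one_iff hab _).1 hsum

end IsPosHomogeneous

theorem picone_N1_subadditive_general {p : ℝ} (hp : 0 < p) {A : E → ℝ}
    (hconv : Convex ℝ {ξ | A ξ ≤ 1}) (hhom : IsPosHomogeneous p A) (hnonneg : ∀ ξ, 0 ≤ A ξ)
    (ξ₁ ξ₂ : E) : A (ξ₁ + ξ₂) ^ (1 / p) ≤ A ξ₁ ^ (1 / p) + A ξ₂ ^ (1 / p) := by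
  have hroot : IsPosHomogeneous 1 (fun ξ ↦ A ξ ^ (1 / p)) := by
    simpa only [mul_one_div_cancel hp.ne'] using hhom.rpow hnonneg (1 / p)
  have hsublevel : Convex ℝ {ξ | A ξ ^ (1 / p) ≤ 1} := by
    have hiff (ξ : E) : A ξ ^ (1 / p) ≤ 1 ↔ A ξ ≤ 1 := by
      rw [one_div, rpow_inv_le_iff_of_pos (hnonneg ξ) zero_le_one hp, one_rpow]
    simpa only [hiff] using hconv
  exact hroot.map_add_le (fun ξ ↦ rpow_nonneg (hnonneg ξ) _) hsublevel ξ₁ ξ₂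

theorem picone_N1_subadditive
    (N : ℕ) (hN : 1 ≤ N) (p : ℝ) (hp : 1 < p)
    (A : EuclideanSpace ℝ (Fin N) → ℝ)
    (hconv : StrictConvexOn ℝ Set.univ A)
    (hhom : ∀ t : ℝ, 0 ≤ t → ∀ ξ : EuclideanSpace ℝ (Fin N), A (t • ξ) = t ^ p * A ξ)
    (hpos : ∀ ξ : EuclideanSpace ℝ (Fin N), ξ ≠ 0 → 0 < A ξ)
    (hzero : A 0 = 0) :
    ∀ ξ₁ ξ₂ : EuclideanSpace ℝ (Fin N),
      (A (ξ₁ + ξ₂)) ^ (1/p) ≤ (A ξ₁) ^ (1/p) + (A ξ₂) ^ (1/p) := by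
  have hnonneg (ξ) : 0 ≤ A ξ := (eq_or_ne ξ 0).elim (fun h ↦ h ▸ hzero.ge) fun h ↦ (hpos ξ h).le
  exact picone_N1_subadditive_general (zero_lt_one.trans hp)
    (by simpa only [Set.mem_univ, true_and] using hconv.convexOn.convex_le 1) hhom hnonneg
end

section
/- Let N ≥ 1, let p > 1 and r > 1 be real numbers, and let A : ℝ^N → ℝ be strictly convex, positively p-homogeneous, with A(ξ) > 0 for ξ ≠ 0 and A(0) = 0. Then N_r(ξ) = A(ξ)^(r/p) is positively r-homogeneous and strictly convex on ℝ^N. -/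
open Real

/-!
The function `M = A ^ (1 / p)` is positively `1`-homogeneous and has the same family of sublevel
sets as `A`. These are convex, so `M` is a gauge, hence convex, and `N_r = M ^ r`. Along the segment
from `x` to `y`, strict convexity of `N_r` comes from that of `s ↦ s ^ r` if `M x ≠ M y`; otherwise
it comes from `A` being strictly below the common value `A x = A y` inside the segment.
-/

/-- Strict quasiconvexity of `f` on `s`: on the open segment between two distinct points of `s`, the
value of `f` is strictly below the larger of the two endpoint values. Some authors call this
strong quasiconvexity. -/
def StrictQuasiconvexOn (𝕜 : Type*) {E β : Type*} [Semiring 𝕜] [PartialOrder 𝕜] [AddCommMonoid E]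
    [SMul 𝕜 E] [LinearOrder β] (s : Set E) (f : E → β) : Prop :=
  Convex 𝕜 s ∧ ∀ ⦃x⦄, x ∈ s → ∀ ⦃y⦄, y ∈ s → x ≠ y → ∀ ⦃a b : 𝕜⦄, 0 < a → 0 < b → a + b = 1 →
    f (a • x + b • y) < max (f x) (f y)

namespace StrictQuasiconvexOn

variable {𝕜 E β γ : Type*} [Semiring 𝕜] [PartialOrder 𝕜] [AddCommMonoid E]

theorem of_strictConvexOn [SMul 𝕜 E] [AddCommMonoid β] [LinearOrder β]
    [IsOrderedAddMonoid β] [Module 𝕜 β] [PosSMulMono 𝕜 β] {s : Set E} {f : E → β}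
    (hf : StrictConvexOn 𝕜 s f) : StrictQuasiconvexOn 𝕜 s f :=
  ⟨hf.1, fun _ hx _ hy hxy _ _ ha hb hab =>
    (hf.2 hx hy hxy ha hb hab).trans_le <| Convex.combo_le_max _ _ ha.le hb.le hab⟩

theorem quasiconvexOn [Module 𝕜 E] [LinearOrder β] {s : Set E} {f : E → β}
    (hf : StrictQuasiconvexOn 𝕜 s f) : QuasiconvexOn 𝕜 s f := by
  refine fun r => convex_iff_pairwise_pos.2 fun x hx y hy hxy a b ha hb hab => ?_
  exact ⟨hf.1 hx.1 hy.1 ha.le hb.le hab,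
    (hf.2 hx.1 hy.1 hxy ha hb hab).le.trans (max_le hx.2 hy.2)⟩

theorem strictMonoOn_comp [SMul 𝕜 E] [LinearOrder β] [LinearOrder γ] {s : Set E} {t : Set β}
    {f : E → β} {g : β → γ} (hf : StrictQuasiconvexOn 𝕜 s f) (hg : StrictMonoOn g t)
    (hst : Set.MapsTo f s t) : StrictQuasiconvexOn 𝕜 s (g ∘ f) := by
  refine ⟨hf.1, fun x hx y hy hxy a b ha hb hab => ?_⟩
  have hz : f (a • x + b • y) ∈ t := hst (hf.1 hx hy ha.le hb.le hab)
  exact (lt_max_iff.1 (hf.2 hx hy hxy ha hb hab)).elim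
    (fun h => lt_max_of_lt_left (hg hz (hst hx) h))
    (fun h => lt_max_of_lt_right (hg hz (hst hy) h))

theorem strictConvexOn_comp [SMul 𝕜 E] [AddCommMonoid β] [LinearOrder β] [SMul 𝕜 β]
    [AddCommMonoid γ] [PartialOrder γ] [Module 𝕜 γ] {s : Set E} {t : Set β} {f : E → β} {g : β → γ}
    (hf : StrictQuasiconvexOn 𝕜 s f) (hf_conv : ConvexOn 𝕜 s f) (hg : StrictConvexOn 𝕜 t g)
    (hg_mono : StrictMonoOn g t) (hst : Set.MapsTo f s t) : StrictConvexOn 𝕜 s (g ∘ f) := by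
  refine ⟨hf.1, fun x hx y hy hxy a b ha hb hab => ?_⟩
  have hz : f (a • x + b • y) ∈ t := hst (hf.1 hx hy ha.le hb.le hab)
  rcases eq_or_ne (f x) (f y) with heq | hne
  · have hlt : f (a • x + b • y) < f x := by
      simpa only [← heq, max_self] using hf.2 hx hy hxy ha hb hab
    calc g (f (a • x + b • y)) < g (f x) := hg_mono hz (hst hx) hlt
      _ = a • g (f x) + b • g (f y) := by rw [← heq, Convex.combo_self hab]
  · calc g (f (a • x + b • y)) ≤ g (a • f x + b • f y) :=
          hg_mono.monotoneOn hz (hg.1 (hst hx) (hst hy) ha.le hb.le hab)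
            (hf_conv.2 hx hy ha.le hb.le hab)
      _ < a • g (f x) + b • g (f y) := hg.2 (hst hx) (hst hy) hne ha hb hab

end StrictQuasiconvexOn

/-- Positive homogeneity of real degree `p`. The scalar `t = 0` is included, so that `f 0 = 0` when
`p ≠ 0`, while for `p = 0` the convention `0 ^ 0 = 1` makes `f` constant. -/
def PosHomogeneous {E : Type*} [SMul ℝ E] (p : ℝ) (f : E → ℝ) : Prop :=
  ∀ t : ℝ, 0 ≤ t → ∀ x : E, f (t • x) = t ^ p * f x

namespace PosHomogeneous

variable {E : Type*} {p q : ℝ} {f : E → ℝ}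

theorem rpow_const [SMul ℝ E] (hf : PosHomogeneous p f) (hf₀ : ∀ x, 0 ≤ f x) (q : ℝ) :
    PosHomogeneous (p * q) (fun x => f x ^ q) := fun t ht x => by
  simp only [hf t ht, mul_rpow (rpow_nonneg ht p) (hf₀ x), rpow_mul ht]

variable [AddCommGroup E] [Module ℝ E]

theorem add_le_of_quasiconvexOn (hf : PosHomogeneous 1 f) (hf₀ : ∀ x, 0 ≤ f x)
    (hqc : QuasiconvexOn ℝ Set.univ f) (x y : E) : f (x + y) ≤ f x + f y := by
  have map_smul (t : ℝ) (ht : 0 ≤ t) (z : E) : f (t • z) = t * f z := by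
    rw [hf t ht z, rpow_one]
  have normalized {z : E} {s : ℝ} (hs : 0 < s) (hz : f z < s) : f (s⁻¹ • z) ≤ 1 := by
    rw [map_smul _ (inv_nonneg.2 hs.le)]
    exact inv_mul_le_one_of_le₀ hz.le hs.le
  -- Dividing by `m > f x` and `n > f y` allows `f` to vanish away from the origin.
  refine le_add_of_forall_lt fun m hm n hn => ?_
  have hm₀ : 0 < m := (hf₀ x).trans_lt hm
  have hn₀ : 0 < n := (hf₀ y).trans_lt hn
  let w : E := (m / (m + n)) • m⁻¹ • x + (n / (m + n)) • n⁻¹ • y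
  have hw : f w ≤ 1 :=
    (hqc 1 ⟨trivial, normalized hm₀ hm⟩ ⟨trivial, normalized hn₀ hn⟩
      (by positivity) (by positivity) (by field_simp)).2
  have hxy : x + y = (m + n) • w := by
    have hx : (m + n) * (m / (m + n) * m⁻¹) = 1 := by field_simp
    have hy : (m + n) * (n / (m + n) * n⁻¹) = 1 := by field_simp
    simp only [w, smul_add, smul_smul, hx, hy, one_smul]
  calc f (x + y) = (m + n) * f w := by rw [hxy, map_smul _ (by positivity)]
    _ ≤ m + n := mul_le_of_le_one_right (by positivity) hw

theorem convexOn_of_quasiconvexOn (hf : PosHomogeneous 1 f) (hf₀ : ∀ x, 0 ≤ f x)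
    (hqc : QuasiconvexOn ℝ Set.univ f) : ConvexOn ℝ Set.univ f := by
  refine ⟨convex_univ, fun x _ y _ a b ha hb _ => ?_⟩
  calc f (a • x + b • y) ≤ f (a • x) + f (b • y) := hf.add_le_of_quasiconvexOn hf₀ hqc _ _
    _ = a • f x + b • f y := by simp only [hf a ha, hf b hb, rpow_one, smul_eq_mul]

theorem strictConvexOn_rpow_of_one_lt (hf : PosHomogeneous 1 f) (hf₀ : ∀ x, 0 ≤ f x)
    (hsqc : StrictQuasiconvexOn ℝ Set.univ f) (hq : 1 < q) :
    StrictConvexOn ℝ Set.univ (fun x => f x ^ q) :=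
  hsqc.strictConvexOn_comp (hf.convexOn_of_quasiconvexOn hf₀ hsqc.quasiconvexOn)
    (strictConvexOn_rpow hq) (strictMonoOn_rpow_Ici_of_exponent_pos (by positivity))
    fun x _ => hf₀ x

end PosHomogeneous

theorem picone_Nr_strictly_convex_general {E : Type*} [AddCommGroup E] [Module ℝ E] {p r : ℝ}
    (hp : 0 < p) (hr : 1 < r) {A : E → ℝ} (hsqc : StrictQuasiconvexOn ℝ Set.univ A)
    (hhom : PosHomogeneous p A) (hnonneg : ∀ ξ, 0 ≤ A ξ) :
    PosHomogeneous r (fun ξ => A ξ ^ (r / p)) ∧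
      StrictConvexOn ℝ Set.univ (fun ξ => A ξ ^ (r / p)) := by
  have root_hom : PosHomogeneous 1 (fun ξ => A ξ ^ p⁻¹) := by
    simpa only [mul_inv_cancel₀ hp.ne'] using hhom.rpow_const hnonneg p⁻¹
  have root_nonneg (ξ : E) : 0 ≤ A ξ ^ p⁻¹ := rpow_nonneg (hnonneg ξ) _
  have root_sqc : StrictQuasiconvexOn ℝ Set.univ (fun ξ => A ξ ^ p⁻¹) :=
    hsqc.strictMonoOn_comp (strictMonoOn_rpow_Ici_of_exponent_pos (inv_pos.2 hp))
      fun ξ _ => hnonneg ξ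
  have root_rpow : (fun ξ => (A ξ ^ p⁻¹) ^ r) = fun ξ => A ξ ^ (r / p) := by
    funext ξ
    rw [← rpow_mul (hnonneg ξ), inv_mul_eq_div]
  rw [← root_rpow]
  exact ⟨by simpa only [one_mul] using root_hom.rpow_const root_nonneg r,
    root_hom.strictConvexOn_rpow_of_one_lt root_nonneg root_sqc hr⟩

theorem picone_Nr_strictly_convex
    (N : ℕ) (hN : 1 ≤ N) (p r : ℝ) (hp : 1 < p) (hr : 1 < r)
    (A : EuclideanSpace ℝ (Fin N) → ℝ)
    (hconv : StrictConvexOn ℝ Set.univ A)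
    (hhom : ∀ t : ℝ, 0 ≤ t → ∀ ξ : EuclideanSpace ℝ (Fin N), A (t • ξ) = t ^ p * A ξ)
    (hpos : ∀ ξ : EuclideanSpace ℝ (Fin N), ξ ≠ 0 → 0 < A ξ)
    (hzero : A 0 = 0) :
    (∀ t : ℝ, 0 ≤ t → ∀ ξ : EuclideanSpace ℝ (Fin N),
      (A (t • ξ)) ^ (r/p) = t ^ r * (A ξ) ^ (r/p)) ∧
    StrictConvexOn ℝ Set.univ (fun ξ => (A ξ) ^ (r/p)) :=
  picone_Nr_strictly_convex_general (by positivity) hr (.of_strictConvexOn hconv) hhom fun ξ =>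
    (eq_or_ne ξ 0).elim (fun h => h ▸ hzero.ge) fun h => (hpos ξ h).le
end

section
/- Let N ≥ 1, let p > 1 and r ≥ 1 be real numbers with r ≤ p, let Ω ⊆ ℝ^N be open, and let u, v : Ω → ℝ be positive differentiable functions. Then for every x ∈ Ω one has ‖∇u(x)‖^p + ‖∇v(x)‖^p ≥ ‖∇v(x)‖^(p−2) · ⟨∇v(x), ∇(u^r / v^(r−1))(x)⟩ + ‖∇u(x)‖^(p−2) · ⟨∇u(x), ∇(v^r / u^(r−1))(x)⟩. (Picone identity for the p(x)-Laplacian, pointwise form.) -/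
open Real
open scoped RealInnerProductSpace

/-!
Since `∇(f ^ r / g ^ (r - 1)) = r t ^ (r - 1) ∇f - (r - 1) t ^ r ∇g` with `t = f / g`, pairing with
`‖∇g‖ ^ (p - 2) ∇g` and applying Cauchy–Schwarz leaves `‖∇g‖ ^ p` times the tangent line at `t` of
the convex function `s ↦ s ^ r`, evaluated at `s = ‖∇f‖ / ‖∇g‖`. Convexity bounds this by
`‖∇f‖ ^ r * ‖∇g‖ ^ (p - r)`, and the sum of this bound and the one with the roles of `f` and `g`
exchanged is controlled by the rearrangement inequality.
-/

theorem tangentLine_le_rpow {r s t : ℝ} (hr : 1 ≤ r) (hs : 0 ≤ s) (ht : 0 < t) :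
    r * t ^ (r - 1) * s - (r - 1) * t ^ r ≤ s ^ r := by
  have bernoulli : 1 + r * (s / t - 1) ≤ (s / t) ^ r := by
    have h : -1 ≤ s / t - 1 := by linarith [div_nonneg hs ht.le]
    simpa using one_add_mul_self_le_rpow_one_add h hr
  calc r * t ^ (r - 1) * s - (r - 1) * t ^ r
      = (1 + r * (s / t - 1)) * t ^ r := by
        rw [rpow_sub_one ht.ne']
        field_simp
        ring
    _ ≤ (s / t) ^ r * t ^ r := by gcongr
    _ = s ^ r := by rw [← mul_rpow (by positivity) ht.le, div_mul_cancel₀ s ht.ne']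

theorem rpow_mul_rpow_add_rpow_mul_rpow_le {a b s t : ℝ} (ha : 0 ≤ a) (hb : 0 ≤ b)
    (hs : 0 ≤ s) (ht : 0 ≤ t) :
    a ^ s * b ^ t + b ^ s * a ^ t ≤ a ^ (s + t) + b ^ (s + t) := by
  rw [rpow_add_of_nonneg ha hs ht, rpow_add_of_nonneg hb hs ht]
  rcases le_total a b with hab | hba
  · exact mul_add_mul_le_mul_add_mul (rpow_le_rpow ha hab hs) (rpow_le_rpow ha hab ht)
  · exact mul_add_mul_le_mul_add_mul' (rpow_le_rpow hb hba hs) (rpow_le_rpow hb hba ht)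

section InnerProductSpace

variable {E : Type*} [NormedAddCommGroup E] [InnerProductSpace ℝ E]

theorem norm_rpow_mul_inner_smul_sub_smul_le {r t : ℝ} (hr : 1 ≤ r) (ht : 0 < t) (p : ℝ)
    (a b : E) :
    ‖b‖ ^ (p - 2) * ⟪b, (r * t ^ (r - 1)) • a - ((r - 1) * t ^ r) • b⟫
      ≤ ‖a‖ ^ r * ‖b‖ ^ (p - r) := by
  rcases eq_or_ne b 0 with rfl | hb
  · rw [inner_zero_left, mul_zero]
    positivity
  have hb : 0 < ‖b‖ := norm_pos_iff.mpr hb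
  calc ‖b‖ ^ (p - 2) * ⟪b, (r * t ^ (r - 1)) • a - ((r - 1) * t ^ r) • b⟫
      = ‖b‖ ^ (p - 2) * (r * t ^ (r - 1) * ⟪b, a⟫ - (r - 1) * t ^ r * ‖b‖ ^ 2) := by
        rw [inner_sub_right, real_inner_smul_right, real_inner_smul_right,
          real_inner_self_eq_norm_sq]
    _ ≤ ‖b‖ ^ (p - 2) * (r * t ^ (r - 1) * (‖b‖ * ‖a‖) - (r - 1) * t ^ r * ‖b‖ ^ 2) := by
        gcongr
        exact real_inner_le_norm b a
    _ = ‖b‖ ^ p * (r * t ^ (r - 1) * (‖a‖ / ‖b‖) - (r - 1) * t ^ r) := by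
        rw [rpow_sub hb, rpow_two]
        field_simp
    _ ≤ ‖b‖ ^ p * (‖a‖ / ‖b‖) ^ r := by
        gcongr
        exact tangentLine_le_rpow hr (by positivity) ht
    _ = ‖a‖ ^ r * ‖b‖ ^ (p - r) := by
        rw [div_rpow (norm_nonneg a) hb.le, rpow_sub hb]
        ring

variable [CompleteSpace E] {f g : E → ℝ} {f' g' x : E}

theorem hasGradientAt_rpow_div_rpow_sub_one (hf : HasGradientAt f f' x)
    (hg : HasGradientAt g g' x) (hfx : 0 < f x) (hgx : 0 < g x) (r : ℝ) :
    HasGradientAt (fun y => f y ^ r / g y ^ (r - 1))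
      ((r * (f x / g x) ^ (r - 1)) • f' - ((r - 1) * (f x / g x) ^ r) • g') x := by
  have hfr := hf.hasFDerivAt.rpow_const (p := r) (Or.inl hfx.ne')
  have hgr := hg.hasFDerivAt.rpow_const (p := r - 1) (Or.inl hgx.ne')
  have hquot := hfr.fun_mul
    ((hasDerivAt_inv (rpow_pos_of_pos hgx (r - 1)).ne').comp_hasFDerivAt x hgr)
  have coeff_f : r * (f x / g x) ^ (r - 1) = (g x ^ (r - 1))⁻¹ * (r * f x ^ (r - 1)) := by
    rw [div_rpow hfx.le hgx.le]
    ring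
  have coeff_g : (r - 1) * (f x / g x) ^ r
      = f x ^ r * (((g x ^ (r - 1)) ^ 2)⁻¹ * ((r - 1) * g x ^ (r - 1 - 1))) := by
    rw [div_rpow hfx.le hgx.le, rpow_sub_one hgx.ne' (r - 1), rpow_sub_one hgx.ne' r]
    field_simp
  refine hquot.congr_fderiv ?_
  rw [coeff_f, coeff_g, map_sub, map_smul, map_smul, Function.comp_apply]
  module

theorem picone_inequality {r : ℝ} (hr : 1 ≤ r) (p : ℝ)
    (hf : DifferentiableAt ℝ f x) (hg : DifferentiableAt ℝ g x) (hfx : 0 < f x) (hgx : 0 < g x) :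
    ‖gradient g x‖ ^ (p - 2) * ⟪gradient g x, gradient (fun y => f y ^ r / g y ^ (r - 1)) x⟫
      ≤ ‖gradient f x‖ ^ r * ‖gradient g x‖ ^ (p - r) := by
  rw [(hasGradientAt_rpow_div_rpow_sub_one hf.hasGradientAt hg.hasGradientAt hfx hgx r).gradient]
  exact norm_rpow_mul_inner_smul_sub_smul_le hr (div_pos hfx hgx) p _ _

theorem picone_identity_pLaplacian_pointwise_general {p r : ℝ} (hr : 1 ≤ r) (hrp : r ≤ p)
    (hf : DifferentiableAt ℝ f x) (hg : DifferentiableAt ℝ g x) (hfx : 0 < f x) (hgx : 0 < g x) :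
    ‖gradient g x‖ ^ (p - 2) * ⟪gradient g x, gradient (fun y => f y ^ r / g y ^ (r - 1)) x⟫
        + ‖gradient f x‖ ^ (p - 2) * ⟪gradient f x, gradient (fun y => g y ^ r / f y ^ (r - 1)) x⟫
      ≤ ‖gradient f x‖ ^ p + ‖gradient g x‖ ^ p := by
  calc _ ≤ ‖gradient f x‖ ^ r * ‖gradient g x‖ ^ (p - r)
          + ‖gradient g x‖ ^ r * ‖gradient f x‖ ^ (p - r) :=
        add_le_add (picone_inequality hr p hf hg hfx hgx) (picone_inequality hr p hg hf hgx hfx)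
    _ ≤ ‖gradient f x‖ ^ (r + (p - r)) + ‖gradient g x‖ ^ (r + (p - r)) :=
        rpow_mul_rpow_add_rpow_mul_rpow_le (norm_nonneg _) (norm_nonneg _)
          (zero_le_one.trans hr) (sub_nonneg.mpr hrp)
    _ = ‖gradient f x‖ ^ p + ‖gradient g x‖ ^ p := by rw [add_sub_cancel]

end InnerProductSpace

theorem picone_identity_pLaplacian_pointwise
    (N : ℕ) (hN : 1 ≤ N) (p r : ℝ) (hp : 1 < p) (hr : 1 ≤ r) (hrp : r ≤ p)
    (Ω : Set (EuclideanSpace ℝ (Fin N))) (hΩ : IsOpen Ω)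
    (u v : EuclideanSpace ℝ (Fin N) → ℝ)
    (hu : ∀ x ∈ Ω, 0 < u x) (hv : ∀ x ∈ Ω, 0 < v x)
    (hud : ∀ x ∈ Ω, DifferentiableAt ℝ u x) (hvd : ∀ x ∈ Ω, DifferentiableAt ℝ v x) :
    ∀ x ∈ Ω,
      ‖gradient v x‖ ^ (p - 2) *
          ⟪gradient v x, gradient (fun y => (u y) ^ r / (v y) ^ (r - 1)) x⟫
        + ‖gradient u x‖ ^ (p - 2) *
          ⟪gradient u x, gradient (fun y => (v y) ^ r / (u y) ^ (r - 1)) x⟫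
      ≤ ‖gradient u x‖ ^ p + ‖gradient v x‖ ^ p := by
  intro x hx
  exact picone_identity_pLaplacian_pointwise_general hr hrp
    (hud x hx) (hvd x hx) (hu x hx) (hv x hx)
end

section
/- Let N ≥ 1, let r ≥ 1 be a real number, and let M : ℝ^N → ℝ be convex and positively r-homogeneous. Then for every θ ∈ (0,1), all v₁, v₂ > 0 and all ξ₁, ξ₂ ∈ ℝ^N, setting v = (1−θ)v₁ + θv₂ and ξ = (1−θ) • ξ₁ + θ • ξ₂, one has M(ξ / (r·v^((r−1)/r))) ≤ (1−θ) · M(ξ₁ / (r·v₁^((r−1)/r))) + θ · M(ξ₂ / (r·v₂^((r−1)/r))). (Pointwise hidden convexity underlying Proposition 2.4.) -/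
open Real

/-!
The chain rule turns `M (∇ (v ^ (1 / r)))` into `r ^ (-r) * (v * M (∇v / v))` when `M` is positively
`r`-homogeneous. Up to a positive constant this is the perspective `(v, ξ) ↦ v * M (ξ / v)` of `M`,
which is jointly convex: for `v = a * v₁ + b * v₂` and `ξ = a • ξ₁ + b • ξ₂`, the point `ξ / v` is
the convex combination of `ξ₁ / v₁` and `ξ₂ / v₂` with weights `a * v₁ / v` and `b * v₂ / v`.
-/

section Perspective

variable {𝕜 E β : Type*} [Field 𝕜]

/-- The perspective `(t, x) ↦ t • f (x / t)` of a function `f`: the epigraph of its slice at height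
`t > 0` is that of `f` dilated by `t`. At `t = 0` the value is `0`, not the recession function
of `f`. -/
def perspective [SMul 𝕜 E] [SMul 𝕜 β] (f : E → β) (p : 𝕜 × E) : β :=
  p.1 • f (p.1⁻¹ • p.2)

theorem inv_smul_combo_eq_combo [AddCommMonoid E] [Module 𝕜 E] {t u : 𝕜} (ht : t ≠ 0) (hu : u ≠ 0)
    (a b : 𝕜) (x y : E) :
    (a * t + b * u)⁻¹ • (a • x + b • y) =
      (a * t / (a * t + b * u)) • t⁻¹ • x + (b * u / (a * t + b * u)) • u⁻¹ • y := by
  simp only [smul_add, smul_smul]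
  congr 2 <;> field_simp

variable [LinearOrder 𝕜] [IsStrictOrderedRing 𝕜] [AddCommMonoid E] [Module 𝕜 E]
  {s : Set E}

theorem convex_perspective_domain (hs : Convex 𝕜 s) :
    Convex 𝕜 {p : 𝕜 × E | 0 < p.1 ∧ p.1⁻¹ • p.2 ∈ s} := by
  rintro ⟨t, x⟩ ⟨ht, hx⟩ ⟨u, y⟩ ⟨hu, hy⟩ a b ha hb hab
  have hv : 0 < a * t + b * u := convex_Ioi (0 : 𝕜) ht hu ha hb hab
  refine ⟨hv, ?_⟩
  change (a * t + b * u)⁻¹ • (a • x + b • y) ∈ s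
  rw [inv_smul_combo_eq_combo ht.ne' hu.ne']
  exact hs hx hy (div_nonneg (mul_nonneg ha ht.le) hv.le) (div_nonneg (mul_nonneg hb hu.le) hv.le)
    (by rw [← add_div, div_self hv.ne'])

theorem convexOn_perspective [AddCommMonoid β] [PartialOrder β] [Module 𝕜 β] [PosSMulMono 𝕜 β]
    {f : E → β} (hf : ConvexOn 𝕜 s f) :
    ConvexOn 𝕜 {p : 𝕜 × E | 0 < p.1 ∧ p.1⁻¹ • p.2 ∈ s} (perspective f) := by
  refine ⟨convex_perspective_domain hf.1, ?_⟩
  rintro ⟨t, x⟩ ⟨ht, hx⟩ ⟨u, y⟩ ⟨hu, hy⟩ a b ha hb hab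
  have hv : 0 < a * t + b * u := convex_Ioi (0 : 𝕜) ht hu ha hb hab
  have weights_add : a * t / (a * t + b * u) + b * u / (a * t + b * u) = 1 := by
    rw [← add_div, div_self hv.ne']
  calc
    (a * t + b * u) • f ((a * t + b * u)⁻¹ • (a • x + b • y))
      ≤ (a * t + b * u) • ((a * t / (a * t + b * u)) • f (t⁻¹ • x) +
          (b * u / (a * t + b * u)) • f (u⁻¹ • y)) := by
        rw [inv_smul_combo_eq_combo ht.ne' hu.ne']
        exact smul_le_smul_of_nonneg_left
          (hf.2 hx hy (div_nonneg (mul_nonneg ha ht.le) hv.le)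
            (div_nonneg (mul_nonneg hb hu.le) hv.le) weights_add) hv.le
    _ = a • t • f (t⁻¹ • x) + b • u • f (u⁻¹ • y) := by
        simp only [smul_add, smul_smul, mul_div_cancel₀ _ hv.ne']

end Perspective

section Homogeneous

variable {E : Type*}

theorem perspective_eq_rpow_mul [SMul ℝ E] {r : ℝ} {M : E → ℝ} {ξ : E}
    (hhom : ∀ t : ℝ, 0 < t → M (t • ξ) = t ^ r * M ξ) {v : ℝ} (hv : 0 < v) :
    perspective M (v, ξ) = v ^ (1 - r) * M ξ := by
  rw [perspective, hhom _ (inv_pos.2 hv), inv_rpow hv.le, rpow_sub hv, rpow_one, smul_eq_mul,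
    ← mul_assoc, div_eq_mul_inv]

theorem map_inv_mul_rpow_smul_eq_perspective [SMul ℝ E] {r : ℝ} (hr : 0 < r) {M : E → ℝ} {ξ : E}
    (hhom : ∀ t : ℝ, 0 < t → M (t • ξ) = t ^ r * M ξ) {v : ℝ} (hv : 0 < v) :
    M ((r * v ^ ((r - 1) / r))⁻¹ • ξ) = (r ^ r)⁻¹ * perspective M (v, ξ) := by
  have hscale : 0 < r * v ^ ((r - 1) / r) := by positivity
  have hpow : (r * v ^ ((r - 1) / r)) ^ r = r ^ r * v ^ (r - 1) := by
    rw [mul_rpow hr.le (rpow_nonneg hv.le _), ← rpow_mul hv.le, div_mul_cancel₀ _ hr.ne']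
  rw [hhom _ (inv_pos.2 hscale), perspective_eq_rpow_mul hhom hv, inv_rpow hscale.le, hpow,
    mul_inv, ← rpow_neg hv.le, neg_sub, mul_assoc]

theorem hidden_convexity_pointwise_general [AddCommMonoid E] [Module ℝ E] {r : ℝ} (hr : 0 < r)
    (C : ConvexCone ℝ E) {M : E → ℝ} (hconv : ConvexOn ℝ C M)
    (hhom : ∀ t : ℝ, 0 < t → ∀ ξ ∈ C, M (t • ξ) = t ^ r * M ξ) :
    ConvexOn ℝ (Set.Ioi (0 : ℝ) ×ˢ (C : Set E))
      fun p ↦ M ((r * p.1 ^ ((r - 1) / r))⁻¹ • p.2) := by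
  have hpersp : ConvexOn ℝ (Set.Ioi (0 : ℝ) ×ˢ (C : Set E)) (perspective M) :=
    (convexOn_perspective hconv).subset
      (fun _ ⟨hv, hξ⟩ ↦ ⟨hv, C.smul_mem (inv_pos.2 hv) hξ⟩) ((convex_Ioi 0).prod hconv.1)
  refine (hpersp.smul (inv_nonneg.2 (rpow_nonneg hr.le r))).congr fun p ⟨hv, hξ⟩ ↦ ?_
  exact (map_inv_mul_rpow_smul_eq_perspective hr (fun t ht ↦ hhom t ht p.2 hξ) hv).symm

end Homogeneous

theorem hidden_convexity_pointwise
    (N : ℕ) (hN : 1 ≤ N) (r : ℝ) (hr : 1 ≤ r)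
    (M : EuclideanSpace ℝ (Fin N) → ℝ)
    (hconv : ConvexOn ℝ Set.univ M)
    (hhom : ∀ t : ℝ, 0 ≤ t → ∀ ξ : EuclideanSpace ℝ (Fin N), M (t • ξ) = t ^ r * M ξ) :
    ∀ θ ∈ Set.Ioo (0:ℝ) 1, ∀ v₁ v₂ : ℝ, 0 < v₁ → 0 < v₂ →
      ∀ ξ₁ ξ₂ : EuclideanSpace ℝ (Fin N),
      M ((r * ((1 - θ) * v₁ + θ * v₂) ^ ((r - 1)/r))⁻¹ • ((1 - θ) • ξ₁ + θ • ξ₂))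
        ≤ (1 - θ) * M ((r * v₁ ^ ((r - 1)/r))⁻¹ • ξ₁)
          + θ * M ((r * v₂ ^ ((r - 1)/r))⁻¹ • ξ₂) :=
  fun θ ⟨hθ₀, hθ₁⟩ v₁ v₂ hv₁ hv₂ ξ₁ ξ₂ ↦
    (hidden_convexity_pointwise_general (zero_lt_one.trans_le hr) ⊤ hconv
      fun t ht ξ _ ↦ hhom t ht.le ξ).2 (x := (v₁, ξ₁)) ⟨hv₁, trivial⟩ (y := (v₂, ξ₂)) ⟨hv₂, trivial⟩
      (sub_nonneg.2 hθ₁.le) hθ₀.le (sub_add_cancel 1 θ)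
end

section
/- Let N ≥ 1 and let K : ℝ^N → ℝ be continuously differentiable on ℝ^N and twice continuously differentiable on ℝ^N \ {0}. Suppose there exist a real m > 1, constants γ > 0, Γ > 0 and k₁, k₂ ≥ 0 such that for all ξ ∈ ℝ^N \ {0} and all η ∈ ℝ^N: D²K(ξ)(η, η) ≥ γ·(k₁ + ‖ξ‖)^(m−2)·‖η‖² and the operator norm of D²K(ξ) is at most Γ·(k₂ + ‖ξ‖)^(m−2). Then there exist constants γ₁, γ₂ with 0 < γ₁ ≤ γ₂ < ∞ and nonnegative constants Γ₁, Γ₂ such that γ₁·‖ξ‖^m − Γ₁ ≤ K(ξ) ≤ γ₂·‖ξ‖^m + Γ₂ for all ξ ∈ ℝ^N \ {0}. -/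
open Real

/-!
Along the segment from `0` to `ξ`, the second derivative of `t ↦ K (t • ξ)` is
`D²K (t • ξ) (ξ, ξ)`, while `C / (m * (m - 1)) * (k + t * ‖ξ‖) ^ m` has second derivative
`C * (k + t * ‖ξ‖) ^ (m - 2) * ‖ξ‖ ^ 2`. Comparing the two turns each bound on `D²K` into a bound on
the first-order Taylor remainder of `K` at `0`. The singularity of `D²K` at `0` is harmless: a
function that is continuous on a closed interval and has nonnegative second derivative in its
interior is convex up to the endpoints. Since `m > 1`, the linear Taylor term is absorbed into
`‖ξ‖ ^ m` by Young's inequality.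
-/

theorem taylor_remainder_le_of_deriv2_le {f f' f'' g g' g'' : ℝ → ℝ} {a b : ℝ} (hab : a < b)
    (hf : ∀ t ∈ Set.Icc a b, HasDerivAt f (f' t) t)
    (hf' : ∀ t ∈ Set.Ioo a b, HasDerivAt f' (f'' t) t)
    (hg : ∀ t ∈ Set.Icc a b, HasDerivAt g (g' t) t)
    (hg' : ∀ t ∈ Set.Ioo a b, HasDerivAt g' (g'' t) t)
    (hfg : ∀ t ∈ Set.Ioo a b, f'' t ≤ g'' t) :
    f b - f a - f' a * (b - a) ≤ g b - g a - g' a * (b - a) := by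
  have hderiv : ∀ t ∈ Set.Icc a b, HasDerivAt (g - f) (g' t - f' t) t :=
    fun t ht ↦ (hg t ht).sub (hf t ht)
  have hconv : ConvexOn ℝ (Set.Icc a b) (g - f) := by
    refine convexOn_of_hasDerivWithinAt2_nonneg (f' := g' - f') (f'' := g'' - f'')
      (convex_Icc a b) (fun t ht ↦ (hderiv t ht).continuousAt.continuousWithinAt) ?_ ?_ ?_ <;>
      rw [interior_Icc]
    · exact fun t ht ↦ (hderiv t (Set.Ioo_subset_Icc_self ht)).hasDerivWithinAt
    · exact fun t ht ↦ ((hg' t ht).sub (hf' t ht)).hasDerivWithinAt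
    · exact fun t ht ↦ sub_nonneg.2 (hfg t ht)
  have ha : a ∈ Set.Icc a b := Set.left_mem_Icc.2 hab.le
  have hslope : g' a - f' a ≤ slope (g - f) a b :=
    hconv.le_slope_of_hasDerivAt ha (Set.right_mem_Icc.2 hab.le) hab (hderiv a ha)
  rw [slope_def_field, le_div_iff₀ (sub_pos.2 hab)] at hslope
  simp only [Pi.sub_apply] at hslope
  linarith

section Ray

variable {𝕜 E F : Type*} [NontriviallyNormedField 𝕜] [NormedAddCommGroup E] [NormedSpace 𝕜 E]
  [NormedAddCommGroup F] [NormedSpace 𝕜 F] {f : E → F} {x : E} {t : 𝕜}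

theorem hasDerivAt_comp_smul_const (hf : DifferentiableAt 𝕜 f (t • x)) :
    HasDerivAt (fun s : 𝕜 ↦ f (s • x)) (fderiv 𝕜 f (t • x) x) t := by
  have hsmul : HasDerivAt (fun s : 𝕜 ↦ s • x) x t := by
    simpa using (hasDerivAt_id t).smul_const x
  exact hf.hasFDerivAt.comp_hasDerivAt t hsmul

theorem hasDerivAt_fderiv_comp_smul_const (hf : DifferentiableAt 𝕜 (fderiv 𝕜 f) (t • x)) :
    HasDerivAt (fun s : 𝕜 ↦ fderiv 𝕜 f (s • x) x) (fderiv 𝕜 (fderiv 𝕜 f) (t • x) x x) t := by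
  simpa using (hasDerivAt_comp_smul_const hf).clm_apply (hasDerivAt_const t x)

end Ray

theorem hasDerivAt_add_mul_rpow {k r t p : ℝ} (h : k + t * r ≠ 0 ∨ 1 ≤ p) :
    HasDerivAt (fun s : ℝ ↦ (k + s * r) ^ p) (r * p * (k + t * r) ^ (p - 1)) t := by
  simpa using (((hasDerivAt_id t).mul_const r).const_add k).rpow_const h

theorem hasDerivAt_deriv_add_mul_rpow {k r t p : ℝ} (h : k + t * r ≠ 0 ∨ 2 ≤ p) :
    HasDerivAt (fun s : ℝ ↦ r * p * (k + s * r) ^ (p - 1))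
      (p * (p - 1) * ((k + t * r) ^ (p - 2) * r ^ 2)) t := by
  have h' : k + t * r ≠ 0 ∨ 1 ≤ p - 1 := h.imp_right fun hp ↦ by linarith
  convert! (hasDerivAt_add_mul_rpow h').const_mul (r * p) using 1
  rw [show p - 1 - 1 = p - 2 by ring]
  ring

/-- The remainder of the first-order Taylor expansion of `x ↦ x ^ m` at `k`, with increment `r`. It
is the model against which the Taylor remainder of a function with `m`-growth is measured. -/
noncomputable def rpowTaylorRemainder (m k r : ℝ) : ℝ :=
  (k + r) ^ m - k ^ m - m * k ^ (m - 1) * r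

section Remainder

variable {m k r : ℝ}

theorem rpow_sub_le_rpowTaylorRemainder (hm : 1 ≤ m) (hk : 0 ≤ k) (hr : 0 ≤ r) :
    r ^ m - m * k ^ (m - 1) * r ≤ rpowTaylorRemainder m k r := by
  have := add_rpow_le_rpow_add hk hr hm
  unfold rpowTaylorRemainder
  linarith

theorem rpowTaylorRemainder_le (hm : 1 ≤ m) (hk : 0 ≤ k) (hr : 0 ≤ r) :
    rpowTaylorRemainder m k r ≤ 2 ^ (m - 1) * (k ^ m + r ^ m) := by
  have hconv : (k + r) ^ m ≤ 2 ^ (m - 1) * (k ^ m + r ^ m) := by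
    lift k to NNReal using hk
    lift r to NNReal using hr
    exact_mod_cast NNReal.rpow_add_le_mul_rpow_add_rpow k r hm
  have hkm : 0 ≤ k ^ m := by positivity
  have hlin : 0 ≤ m * k ^ (m - 1) * r := by positivity
  unfold rpowTaylorRemainder
  linarith

theorem exists_mul_le_mul_rpow_add (hm : 1 < m) {ε C : ℝ} (hε : 0 < ε) (hC : 0 ≤ C) :
    ∃ D, 0 ≤ D ∧ ∀ r : ℝ, 0 ≤ r → C * r ≤ ε * r ^ m + D := by
  have hm0 : 0 < m := one_pos.trans hm
  have hconj := HolderConjugate.conjExponent hm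
  set q := conjExponent m
  have hq : 0 < q := hconj.symm.pos
  -- Young's inequality for `(δ * r) * (C / δ)`, with `δ` chosen so that `δ ^ m / m = ε`.
  obtain ⟨δ, hδ, hδm⟩ : ∃ δ : ℝ, 0 < δ ∧ δ ^ m = m * ε :=
    ⟨(m * ε) ^ m⁻¹, by positivity, rpow_inv_rpow (by positivity) hm0.ne'⟩
  refine ⟨(C / δ) ^ q / q, by positivity, fun r hr ↦ ?_⟩
  calc C * r = (δ * r) * (C / δ) := by field_simp
    _ ≤ (δ * r) ^ m / m + (C / δ) ^ q / q :=
      young_inequality_of_nonneg (by positivity) (by positivity) hconj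
    _ = ε * r ^ m + (C / δ) ^ q / q := by
      rw [mul_rpow hδ.le hr, hδm]
      field_simp

end Remainder

section Growth

variable {E : Type*} [NormedAddCommGroup E] [NormedSpace ℝ E] {K : E → ℝ} {m k : ℝ}

theorem mul_norm_sq_le_apply_of_smul {B : E →L[ℝ] E →L[ℝ] ℝ} {a t : ℝ} {x : E} (ht : t ≠ 0)
    (h : a * ‖t • x‖ ^ 2 ≤ B (t • x) (t • x)) : a * ‖x‖ ^ 2 ≤ B x x := by
  simp only [norm_smul, mul_pow, norm_eq_abs, sq_abs, map_smul, smul_apply, smul_eq_mul] at h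
  refine le_of_mul_le_mul_left ?_ (sq_pos_of_ne_zero ht)
  linarith

theorem mul_rpowTaylorRemainder_le (hK : Differentiable ℝ K)
    (hK' : DifferentiableOn ℝ (fderiv ℝ K) {0}ᶜ) (hm : 1 < m) {c : ℝ} (hk : 0 ≤ k)
    (hc : ∀ ξ ≠ 0, c * (k + ‖ξ‖) ^ (m - 2) * ‖ξ‖ ^ 2 ≤ fderiv ℝ (fderiv ℝ K) ξ ξ ξ) (ξ : E) :
    c / (m * (m - 1)) * rpowTaylorRemainder m k ‖ξ‖ ≤ K ξ - K 0 - fderiv ℝ K 0 ξ := by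
  rcases eq_or_ne ξ 0 with rfl | hξ
  · simp [rpowTaylorRemainder]
  have hm1 : m - 1 ≠ 0 := (sub_pos.2 hm).ne'
  have hm0 : m ≠ 0 := (one_pos.trans hm).ne'
  have hr : 0 < ‖ξ‖ := norm_pos_iff.2 hξ
  have hne : ∀ t ∈ Set.Ioo (0 : ℝ) 1, t • ξ ≠ 0 := fun t ht ↦ smul_ne_zero ht.1.ne' hξ
  have hbase : ∀ t ∈ Set.Ioo (0 : ℝ) 1, k + t * ‖ξ‖ ≠ 0 :=
    fun t ht ↦ (add_pos_of_nonneg_of_pos hk (mul_pos ht.1 hr)).ne'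
  have hradial : ∀ t ∈ Set.Ioo (0 : ℝ) 1,
      c * (k + t * ‖ξ‖) ^ (m - 2) * ‖ξ‖ ^ 2 ≤ fderiv ℝ (fderiv ℝ K) (t • ξ) ξ ξ := by
    intro t ht
    refine mul_norm_sq_le_apply_of_smul ht.1.ne' ?_
    simpa only [norm_smul, norm_of_nonneg ht.1.le] using hc (t • ξ) (hne t ht)
  have hcomparison := taylor_remainder_le_of_deriv2_le zero_lt_one
    (fun t _ ↦ (hasDerivAt_add_mul_rpow (.inr hm.le)).const_mul (c / (m * (m - 1))))
    (fun t ht ↦ (hasDerivAt_deriv_add_mul_rpow (.inl (hbase t ht))).const_mul _)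
    (fun t _ ↦ hasDerivAt_comp_smul_const (hK (t • ξ)))
    (fun t ht ↦ hasDerivAt_fderiv_comp_smul_const
      (hK'.differentiableAt (isOpen_compl_singleton.mem_nhds (hne t ht))))
    (fun t ht ↦ by
      rw [← mul_assoc, div_mul_cancel₀ c (mul_ne_zero hm0 hm1), ← mul_assoc]
      exact hradial t ht)
  simp only [zero_mul, one_mul, add_zero, sub_zero, mul_one, zero_smul, one_smul] at hcomparison
  unfold rpowTaylorRemainder
  linarith

theorem le_mul_rpowTaylorRemainder (hK : Differentiable ℝ K)
    (hK' : DifferentiableOn ℝ (fderiv ℝ K) {0}ᶜ) (hm : 1 < m) {C : ℝ} (hk : 0 ≤ k)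
    (hC : ∀ ξ ≠ 0, fderiv ℝ (fderiv ℝ K) ξ ξ ξ ≤ C * (k + ‖ξ‖) ^ (m - 2) * ‖ξ‖ ^ 2) (ξ : E) :
    K ξ - K 0 - fderiv ℝ K 0 ξ ≤ C / (m * (m - 1)) * rpowTaylorRemainder m k ‖ξ‖ := by
  have hneg : fderiv ℝ (-K) = -fderiv ℝ K := funext fun _ ↦ fderiv_neg
  have h := mul_rpowTaylorRemainder_le (K := -K) (c := -C) hK.neg (by rw [hneg]; exact hK'.neg) hm
    hk (fun ζ hζ ↦ by simpa [hneg, fderiv_neg] using hC ζ hζ) ξ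
  simp only [hneg, Pi.neg_apply, neg_apply, neg_div, neg_mul] at h
  linarith

theorem exists_mul_rpow_sub_le (hK : Differentiable ℝ K)
    (hK' : DifferentiableOn ℝ (fderiv ℝ K) {0}ᶜ) (hm : 1 < m) {γ : ℝ} (hγ : 0 < γ) (hk : 0 ≤ k)
    (hell : ∀ ξ ≠ 0, γ * (k + ‖ξ‖) ^ (m - 2) * ‖ξ‖ ^ 2 ≤ fderiv ℝ (fderiv ℝ K) ξ ξ ξ) :
    ∃ γ₁ Γ₁ : ℝ, 0 < γ₁ ∧ 0 ≤ Γ₁ ∧ ∀ ξ, γ₁ * ‖ξ‖ ^ m - Γ₁ ≤ K ξ := by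
  have hm0 : 0 < m := one_pos.trans hm
  set A := γ / (m * (m - 1))
  have hA : 0 < A := div_pos hγ (mul_pos hm0 (sub_pos.2 hm))
  obtain ⟨D, hD, hlin⟩ := exists_mul_le_mul_rpow_add hm (half_pos hA)
    (C := A * (m * k ^ (m - 1)) + ‖fderiv ℝ K 0‖) (by positivity)
  refine ⟨A / 2, D + |K 0|, half_pos hA, by positivity, fun ξ ↦ ?_⟩
  have htaylor := mul_rpowTaylorRemainder_le hK hK' hm hk hell ξ
  have hmodel := mul_le_mul_of_nonneg_left
    (rpow_sub_le_rpowTaylorRemainder hm.le hk (norm_nonneg ξ)) hA.le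
  have hderiv := (abs_le.1 ((fderiv ℝ K 0).le_opNorm ξ)).1
  linarith [hlin ‖ξ‖ (norm_nonneg ξ), neg_abs_le (K 0)]

theorem exists_le_mul_rpow_add (hK : Differentiable ℝ K)
    (hK' : DifferentiableOn ℝ (fderiv ℝ K) {0}ᶜ) (hm : 1 < m) {Γ : ℝ} (hΓ : 0 ≤ Γ) (hk : 0 ≤ k)
    (hgrowth : ∀ ξ ≠ 0, fderiv ℝ (fderiv ℝ K) ξ ξ ξ ≤ Γ * (k + ‖ξ‖) ^ (m - 2) * ‖ξ‖ ^ 2) :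
    ∃ γ₂ Γ₂ : ℝ, 0 ≤ Γ₂ ∧ ∀ ξ, K ξ ≤ γ₂ * ‖ξ‖ ^ m + Γ₂ := by
  set B := Γ / (m * (m - 1))
  have hB : 0 ≤ B := div_nonneg hΓ (mul_pos (one_pos.trans hm) (sub_pos.2 hm)).le
  obtain ⟨D, hD, hlin⟩ := exists_mul_le_mul_rpow_add hm one_pos (norm_nonneg (fderiv ℝ K 0))
  refine ⟨B * 2 ^ (m - 1) + 1, B * 2 ^ (m - 1) * k ^ m + D + |K 0|, by positivity, fun ξ ↦ ?_⟩
  have htaylor := le_mul_rpowTaylorRemainder hK hK' hm hk hgrowth ξ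
  have hmodel := mul_le_mul_of_nonneg_left (rpowTaylorRemainder_le hm.le hk (norm_nonneg ξ)) hB
  have hderiv := (abs_le.1 ((fderiv ℝ K 0).le_opNorm ξ)).2
  linarith [hlin ‖ξ‖ (norm_nonneg ξ), le_abs_self (K 0)]

theorem growth_estimate_from_ellipticity_general (hK : Differentiable ℝ K)
    (hK' : DifferentiableOn ℝ (fderiv ℝ K) {0}ᶜ) (hm : 1 < m) {γ Γ k₁ k₂ : ℝ} (hγ : 0 < γ)
    (hΓ : 0 ≤ Γ) (hk₁ : 0 ≤ k₁) (hk₂ : 0 ≤ k₂)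
    (hell : ∀ ξ ≠ 0, γ * (k₁ + ‖ξ‖) ^ (m - 2) * ‖ξ‖ ^ 2 ≤ fderiv ℝ (fderiv ℝ K) ξ ξ ξ)
    (hgrowth : ∀ ξ ≠ 0, fderiv ℝ (fderiv ℝ K) ξ ξ ξ ≤ Γ * (k₂ + ‖ξ‖) ^ (m - 2) * ‖ξ‖ ^ 2) :
    ∃ γ₁ γ₂ Γ₁ Γ₂ : ℝ, 0 < γ₁ ∧ γ₁ ≤ γ₂ ∧ 0 ≤ Γ₁ ∧ 0 ≤ Γ₂ ∧
      ∀ ξ, γ₁ * ‖ξ‖ ^ m - Γ₁ ≤ K ξ ∧ K ξ ≤ γ₂ * ‖ξ‖ ^ m + Γ₂ := by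
  obtain ⟨γ₁, Γ₁, hγ₁, hΓ₁, hlower⟩ := exists_mul_rpow_sub_le hK hK' hm hγ hk₁ hell
  obtain ⟨γ₂, Γ₂, hΓ₂, hupper⟩ := exists_le_mul_rpow_add hK hK' hm hΓ hk₂ hgrowth
  refine ⟨γ₁, max γ₁ γ₂, Γ₁, Γ₂, hγ₁, le_max_left _ _, hΓ₁, hΓ₂, fun ξ ↦ ⟨hlower ξ, ?_⟩⟩
  calc K ξ ≤ γ₂ * ‖ξ‖ ^ m + Γ₂ := hupper ξ
    _ ≤ max γ₁ γ₂ * ‖ξ‖ ^ m + Γ₂ := by gcongr; exact le_max_right _ _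

end Growth

section Hypotheses

variable {𝕜 E F : Type*} [NontriviallyNormedField 𝕜] [NormedAddCommGroup E] [NormedSpace 𝕜 E]
  [NormedAddCommGroup F] [NormedSpace 𝕜 F]

theorem differentiableOn_fderiv_of_contDiffOn_two {f : E → F} {s : Set E}
    (hf : ContDiffOn 𝕜 2 f s) (hs : IsOpen s) : DifferentiableOn 𝕜 (fderiv 𝕜 f) s :=
  (hf.fderiv_of_isOpen (m := 1) hs (by norm_num)).differentiableOn one_ne_zero

theorem norm_apply_apply_self_le_of_opNorm_le {B : E →L[𝕜] E →L[𝕜] F} {C : ℝ} (hB : ‖B‖ ≤ C)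
    (x : E) : ‖B x x‖ ≤ C * ‖x‖ ^ 2 :=
  (B.le_of_opNorm₂_le_of_le hB le_rfl le_rfl).trans_eq (by ring)

end Hypotheses

theorem growth_estimate_from_ellipticity
    (N : ℕ) (hN : 1 ≤ N)
    (K : EuclideanSpace ℝ (Fin N) → ℝ)
    (hK1 : ContDiff ℝ 1 K)
    (hK2 : ContDiffOn ℝ 2 K {(0 : EuclideanSpace ℝ (Fin N))}ᶜ)
    (m : ℝ) (hm : 1 < m)
    (γ Γ : ℝ) (hγ : 0 < γ) (hΓ : 0 < Γ)
    (k₁ k₂ : ℝ) (hk₁ : 0 ≤ k₁) (hk₂ : 0 ≤ k₂)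
    (hell : ∀ ξ : EuclideanSpace ℝ (Fin N), ξ ≠ 0 → ∀ η : EuclideanSpace ℝ (Fin N),
      γ * (k₁ + ‖ξ‖) ^ (m - 2) * ‖η‖ ^ 2 ≤ fderiv ℝ (fderiv ℝ K) ξ η η)
    (hgrowth : ∀ ξ : EuclideanSpace ℝ (Fin N), ξ ≠ 0 →
      ‖fderiv ℝ (fderiv ℝ K) ξ‖ ≤ Γ * (k₂ + ‖ξ‖) ^ (m - 2)) :
    ∃ γ₁ γ₂ Γ₁ Γ₂ : ℝ, 0 < γ₁ ∧ γ₁ ≤ γ₂ ∧ 0 ≤ Γ₁ ∧ 0 ≤ Γ₂ ∧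
      ∀ ξ : EuclideanSpace ℝ (Fin N), ξ ≠ 0 →
        γ₁ * ‖ξ‖ ^ m - Γ₁ ≤ K ξ ∧ K ξ ≤ γ₂ * ‖ξ‖ ^ m + Γ₂ := by
  obtain ⟨γ₁, γ₂, Γ₁, Γ₂, hγ₁, hγ₁₂, hΓ₁, hΓ₂, hbounds⟩ :=
    growth_estimate_from_ellipticity_general (hK1.differentiable one_ne_zero)
      (differentiableOn_fderiv_of_contDiffOn_two hK2 isOpen_compl_singleton) hm hγ hΓ.le hk₁ hk₂
      (fun ξ hξ ↦ hell ξ hξ ξ)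
      (fun ξ hξ ↦ le_of_abs_le (norm_apply_apply_self_le_of_opNorm_le (hgrowth ξ hξ) ξ))
  exact ⟨γ₁, γ₂, Γ₁, Γ₂, hγ₁, hγ₁₂, hΓ₁, hΓ₂, fun ξ _ ↦ hbounds ξ⟩
end
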